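/- The cross product of paths satisfies the Leibniz rule: for u ∈ Ω_p(X;ℤ) and v ∈ Ω_q(Y;ℤ), one has u × v ∈ Ω_{p+q}(X ⊡ Y;ℤ) and ∂(u × v) = (∂u) × v + (-1)^p u × (∂v). -/

import Mathlib

/-- The boundary operator on the free ℤ-module generated by elementary paths (encoded as lists
of vertices): `∂ e_{i₀…i_n} = Σ_j (-1)^j e_{i₀…î_j…i_n}` for paths of length ≥ 1, and `∂ = 0`
on paths of length 0. -/
noncomputable def bdry (V : Type*) : (List V →₀ ℤ) →ₗ[ℤ] (List V →₀ ℤ) :=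
  Finsupp.lsum ℤ fun l => LinearMap.toSpanSingleton ℤ _
    (if 2 ≤ l.length then
      ∑ j ∈ Finset.range l.length, (-1 : ℤ) ^ j • Finsupp.single (l.eraseIdx j) (1 : ℤ)
    else 0)

/-- `u` is a ℤ-linear combination of strongly regular allowed elementary `n`-paths in the
digraph with adjacency `adj` (allowed: consecutive vertices joined by an edge; strongly
regular: all vertices pairwise distinct), i.e. `u ∈ A_n(G;ℤ)`. -/
def IsA {V : Type*} (adj : V → V → Prop) (n : ℕ) (u : List V →₀ ℤ) : Prop :=
  ∀ l ∈ u.support, l.length = n + 1 ∧ l.Chain' adj ∧ l.Nodup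

/-- `u ∈ Ω_n(G;ℤ)`: `u ∈ A_n(G;ℤ)` and `∂u ∈ A_{n-1}(G;ℤ)`. -/
def IsOmega {V : Type*} (adj : V → V → Prop) (n : ℕ) (u : List V →₀ ℤ) : Prop :=
  IsA adj n u ∧ IsA adj (n - 1) (bdry V u)
/-- The Cartesian product digraph: `(v,w) → (v',w')` iff `v = v'` and `w → w'`, or `v → v'` and
`w = w'`. -/
def prodAdj {X Y : Type*} (adjX : X → X → Prop) (adjY : Y → Y → Prop) :
    X × Y → X × Y → Prop :=
  fun a b => (a.1 = b.1 ∧ adjY a.2 b.2) ∨ (adjX a.1 b.1 ∧ a.2 = b.2)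

/-- The cross product of two elementary paths (as lists of vertices):
`e_x × e_y = Σ_{z stair-like} (-1)^{L(z)} e_z`, where `L(z)` is the number of grid cells below
the staircase of `z`.  Defined recursively on the first step of the merge; taking a `y`-step
first multiplies by `(-1)^{#remaining x-steps}` as each remaining `x`-step acquires one more
cell below it. -/
noncomputable def cross {X Y : Type*} : List X → List Y → (List (X × Y) →₀ ℤ)
  | [], _ => 0
  | _ :: _, [] => 0
  | [a], b :: ys => Finsupp.single ((b :: ys).map (fun t => (a, t))) 1
  | a :: a2 :: xs, [b] => Finsupp.single ((a :: a2 :: xs).map (fun s => (s, b))) 1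
  | a :: a2 :: xs, b :: b2 :: ys =>
      Finsupp.mapDomain (List.cons (a, b)) (cross (a2 :: xs) (b :: b2 :: ys)) +
      ((-1 : ℤ) ^ (xs.length + 1)) •
        Finsupp.mapDomain (List.cons (a, b)) (cross (a :: a2 :: xs) (b2 :: ys))
termination_by x y => x.length + y.length
decreasing_by all_goals simp <;> omega

/-- The bilinear extension of the cross product to ℤ-linear combinations of paths. -/
noncomputable def crossF {X Y : Type*} (u : List X →₀ ℤ) (v : List Y →₀ ℤ) :
    List (X × Y) →₀ ℤ :=
  u.sum fun x cx => v.sum fun y cy => (cx * cy) • cross x y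

/-!
The augmented boundary, which also deletes the only vertex of a one-vertex path, satisfies the
cone formula `∂(a · w) = w - a · ∂w`, and it agrees with `bdry` up to multiples of the empty
path, which the cross product kills.  A staircase over `a :: x` and `b :: y` starts at `(a, b)`
and continues with a staircase over `x` and `b :: y` or over `a :: x` and `y`; applying the cone
formula to this recursion gives the Leibniz rule by induction, the two chains `x × (b :: y)` and
`(a :: x) × y` being the faces where `a`, respectively `b`, is deleted.  The induction starts at
the paths with a single vertex in one factor, where the cross product is a copy of the other
path.  Stair-like paths over strongly regular allowed paths are themselves strongly regular and
allowed, so the Leibniz rule puts `∂(u × v)` into `A_{p+q-1}`.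
-/

open Finsupp

theorem supported_le_iff_single_mem {α R : Type*} [Semiring R] {s : Set α}
    {N : Submodule R (α →₀ R)} :
    supported R R s ≤ N ↔ ∀ a ∈ s, single a 1 ∈ N := by
  rw [supported_eq_span_single, Submodule.span_le, Set.image_subset_iff]
  rfl

section Boundary

variable {V W : Type*}

/-- Prepending the vertex `a` to every path of a chain: the cone with apex `a`. -/
noncomputable def prepend (a : V) : (List V →₀ ℤ) →ₗ[ℤ] (List V →₀ ℤ) :=
  lmapDomain ℤ ℤ (List.cons a)

@[simp]
theorem prepend_single (a : V) (l : List V) (c : ℤ) :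
    prepend a (single l c) = single (a :: l) c :=
  mapDomain_single

theorem prepend_mem_supported {a : V} {s t : Set (List V)} (h : ∀ l ∈ s, a :: l ∈ t)
    {w : List V →₀ ℤ} (hw : w ∈ supported ℤ ℤ s) : prepend a w ∈ supported ℤ ℤ t := by
  have hle : supported ℤ ℤ s ≤ (supported ℤ ℤ t).comap (prepend a) :=
    supported_le_iff_single_mem.2 fun l hl => by
      simpa using single_mem_supported ℤ (1 : ℤ) (h l hl)
  exact hle hw

/-- The augmented boundary: the same alternating sum as in `bdry`, but also on one-vertex paths,
which it sends to the empty path `[]`. -/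
noncomputable def augBdry (V : Type*) : (List V →₀ ℤ) →ₗ[ℤ] (List V →₀ ℤ) :=
  linearCombination ℤ fun l =>
    ∑ j ∈ Finset.range l.length, (-1 : ℤ) ^ j • single (l.eraseIdx j) (1 : ℤ)

theorem augBdry_single (l : List V) :
    augBdry V (single l 1) =
      ∑ j ∈ Finset.range l.length, (-1 : ℤ) ^ j • single (l.eraseIdx j) (1 : ℤ) := by
  rw [augBdry, linearCombination_single, one_smul]

@[simp]
theorem augBdry_single_nil : augBdry V (single [] 1) = 0 := by
  simp [augBdry_single]

theorem augBdry_single_cons (a : V) (l : List V) :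
    augBdry V (single (a :: l) 1) = single l 1 - prepend a (augBdry V (single l 1)) := by
  rw [augBdry_single, augBdry_single, List.length_cons, Finset.sum_range_succ', add_comm,
    map_sum, sub_eq_add_neg, ← Finset.sum_neg_distrib]
  simp [pow_succ]

theorem augBdry_prepend (a : V) (w : List V →₀ ℤ) :
    augBdry V (prepend a w) = w - prepend a (augBdry V w) := by
  suffices augBdry V ∘ₗ prepend a = LinearMap.id - prepend a ∘ₗ augBdry V from
    LinearMap.congr_fun this w
  ext1 l
  ext1
  simpa using augBdry_single_cons a l

theorem augBdry_single_mem_supported (l : List V) :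
    augBdry V (single l 1) ∈ supported ℤ ℤ {l' | l'.length + 1 = l.length} := by
  rw [augBdry_single]
  refine Submodule.sum_mem _ fun j hj => Submodule.smul_mem _ _ (single_mem_supported ℤ _ ?_)
  exact List.length_eraseIdx_add_one (Finset.mem_range.1 hj)

theorem augBdry_single_mem_supported_ne_nil {l : List V} (hl : l.length ≠ 1) :
    augBdry V (single l 1) ∈ supported ℤ ℤ {l' | l' ≠ []} := by
  refine supported_mono ?_ (augBdry_single_mem_supported l)
  rintro l' hl' rfl
  exact hl (by simpa using hl'.symm)

theorem augBdry_single_map (f : V → W) (l : List V) :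
    augBdry W (single (l.map f) 1) = mapDomain (List.map f) (augBdry V (single l 1)) := by
  simp only [augBdry_single, List.length_map, mapDomain_finsetSum, mapDomain_smul,
    mapDomain_single, List.eraseIdx_map]

theorem bdry_single (l : List V) :
    bdry V (single l 1) = if 2 ≤ l.length then augBdry V (single l 1) else 0 := by
  simp [bdry, augBdry_single]

theorem bdry_eq_zero {u : List V →₀ ℤ} (hu : u ∈ supported ℤ ℤ {l | l.length = 1}) :
    bdry V u = 0 := by
  have h : supported ℤ ℤ {l : List V | l.length = 1} ≤ LinearMap.ker (bdry V) :=
    supported_le_iff_single_mem.2 fun l (hl : l.length = 1) => by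
      rw [LinearMap.mem_ker, bdry_single, if_neg (by lia)]
  exact h hu

theorem bdry_eq_augBdry {u : List V →₀ ℤ} (hu : u ∈ supported ℤ ℤ {l | 2 ≤ l.length}) :
    bdry V u = augBdry V u := by
  have h : supported ℤ ℤ {l : List V | 2 ≤ l.length} ≤
      LinearMap.eqLocus (bdry V) (augBdry V) :=
    supported_le_iff_single_mem.2 fun l (hl : 2 ≤ l.length) => by
      rw [LinearMap.mem_eqLocus, bdry_single, if_pos hl]
  exact h hu

theorem map_bdry_eq_map_augBdry {M : Type*} [AddCommGroup M] (f : (List V →₀ ℤ) →ₗ[ℤ] M)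
    (hf : f (single [] 1) = 0) (u : List V →₀ ℤ) : f (bdry V u) = f (augBdry V u) := by
  suffices f ∘ₗ bdry V = f ∘ₗ augBdry V from LinearMap.congr_fun this u
  ext l
  match l with
  | [] => simp [bdry_single]
  | [a] => simp [bdry_single, augBdry_single_cons, hf]
  | a :: b :: l => simp [bdry_single]

end Boundary

section Cross

variable {X Y : Type*}

@[simp]
theorem cross_nil_left (y : List Y) : cross ([] : List X) y = 0 := by
  simp [cross]

@[simp]
theorem cross_nil_right (x : List X) : cross x ([] : List Y) = 0 := by
  cases x <;> simp [cross]

theorem cross_singleton_left (a : X) {y : List Y} (hy : y ≠ []) :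
    cross [a] y = single (y.map (a, ·)) 1 := by
  obtain ⟨b, y, rfl⟩ := List.exists_cons_of_ne_nil hy
  simp [cross]

theorem cross_singleton_right (b : Y) {x : List X} (hx : x ≠ []) :
    cross x [b] = single (x.map (·, b)) 1 := by
  match x with
  | [a] => simp [cross]
  | a :: a' :: x => simp [cross]

theorem cross_cons_cons (a : X) (b : Y) {x : List X} {y : List Y} (h : x ≠ [] ∨ y ≠ []) :
    cross (a :: x) (b :: y) = prepend (a, b) (cross x (b :: y)) +
      (-1 : ℤ) ^ x.length • prepend (a, b) (cross (a :: x) y) := by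
  match x, y with
  | [], b' :: y => simp [cross]
  | a' :: x, [] => simp [cross_singleton_right b]
  | a' :: x, b' :: y => rw [cross]; rfl

/-- `crossF` as a bundled bilinear map. -/
noncomputable def crossLin (X Y : Type*) :
    (List X →₀ ℤ) →ₗ[ℤ] (List Y →₀ ℤ) →ₗ[ℤ] (List (X × Y) →₀ ℤ) :=
  linearCombination ℤ fun x => linearCombination ℤ (cross x)

theorem crossF_eq_crossLin (u : List X →₀ ℤ) (v : List Y →₀ ℤ) :
    crossF u v = crossLin X Y u v := by
  simp only [crossF, crossLin, linearCombination_apply, Finsupp.sum, LinearMap.sum_apply,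
    LinearMap.smul_apply, Finset.smul_sum, smul_smul]

@[simp]
theorem crossLin_single_single (x : List X) (y : List Y) :
    crossLin X Y (single x 1) (single y 1) = cross x y := by
  simp [crossLin]

@[simp]
theorem crossLin_single_nil_left : crossLin X Y (single [] 1) = 0 := by
  ext1 y
  ext1
  simp

@[simp]
theorem crossLin_single_nil_right (u : List X →₀ ℤ) : crossLin X Y u (single [] 1) = 0 := by
  suffices (crossLin X Y).flip (single [] 1) = 0 from LinearMap.congr_fun this u
  ext1 x
  ext1
  simp

theorem crossLin_bdry_left (u : List X →₀ ℤ) (v : List Y →₀ ℤ) :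
    crossLin X Y (bdry X u) v = crossLin X Y (augBdry X u) v := by
  rw [map_bdry_eq_map_augBdry _ crossLin_single_nil_left]

theorem crossLin_bdry_right (u : List X →₀ ℤ) (v : List Y →₀ ℤ) :
    crossLin X Y u (bdry Y v) = crossLin X Y u (augBdry Y v) :=
  map_bdry_eq_map_augBdry _ (crossLin_single_nil_right u) v

theorem crossLin_prepend_left (a : X) (b : Y) {n : ℕ} {w : List X →₀ ℤ}
    (hw : w ∈ supported ℤ ℤ {x | x.length = n}) {y : List Y} (hy : y ≠ []) :
    crossLin X Y (prepend a w) (single (b :: y) 1) =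
      prepend (a, b) (crossLin X Y w (single (b :: y) 1)) +
        (-1 : ℤ) ^ n • prepend (a, b) (crossLin X Y (prepend a w) (single y 1)) := by
  have h : supported ℤ ℤ {x : List X | x.length = n} ≤ LinearMap.eqLocus
      ((crossLin X Y).flip (single (b :: y) 1) ∘ₗ prepend a)
      (prepend (a, b) ∘ₗ (crossLin X Y).flip (single (b :: y) 1) +
        (-1 : ℤ) ^ n • prepend (a, b) ∘ₗ (crossLin X Y).flip (single y 1) ∘ₗ prepend a) :=
    supported_le_iff_single_mem.2 fun x (hx : x.length = n) => by
      simp [cross_cons_cons a b (Or.inr hy), hx]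
  exact h hw

theorem crossLin_prepend_right (a : X) (b : Y) {x : List X} (hx : x ≠ []) (w : List Y →₀ ℤ) :
    crossLin X Y (single (a :: x) 1) (prepend b w) =
      prepend (a, b) (crossLin X Y (single x 1) (prepend b w)) +
        (-1 : ℤ) ^ x.length • prepend (a, b) (crossLin X Y (single (a :: x) 1) w) := by
  suffices crossLin X Y (single (a :: x) 1) ∘ₗ prepend b =
      prepend (a, b) ∘ₗ crossLin X Y (single x 1) ∘ₗ prepend b +
        (-1 : ℤ) ^ x.length • prepend (a, b) ∘ₗ crossLin X Y (single (a :: x) 1) from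
    LinearMap.congr_fun this w
  ext1 y
  ext1
  simp [cross_cons_cons a b (Or.inl hx)]

end Cross

/-- `IsStaircase x y z`: the path `z` in the product is stair-like and projects to `x` and `y`,
i.e. each step of `z` follows one step of `x` or one step of `y`. -/
inductive IsStaircase {X Y : Type*} : List X → List Y → List (X × Y) → Prop
  | singleton (a : X) (b : Y) : IsStaircase [a] [b] [(a, b)]
  | cons_left (a : X) {x : List X} {b : Y} {y : List Y} {z : List (X × Y)}
      (h : IsStaircase x (b :: y) z) : IsStaircase (a :: x) (b :: y) ((a, b) :: z)
  | cons_right (b : Y) {a : X} {x : List X} {y : List Y} {z : List (X × Y)}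
      (h : IsStaircase (a :: x) y z) : IsStaircase (a :: x) (b :: y) ((a, b) :: z)

namespace IsStaircase

variable {X Y : Type*} {x : List X} {y : List Y} {z : List (X × Y)}

theorem ne_nil (h : IsStaircase x y z) : x ≠ [] ∧ y ≠ [] := by
  cases h <;> simp

theorem head?_eq {a : X} {b : Y} (h : IsStaircase (a :: x) (b :: y) z) :
    z.head? = some (a, b) := by
  cases h <;> rfl

theorem length_add_one (h : IsStaircase x y z) : z.length + 1 = x.length + y.length := by
  induction h with
  | singleton => rfl
  | cons_left a _ ih => simp only [List.length_cons] at ih ⊢; lia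
  | cons_right b _ ih => simp only [List.length_cons] at ih ⊢; lia

theorem two_le_length (h : IsStaircase x y z) (hxy : x.length ≠ 1 ∨ y.length ≠ 1) :
    2 ≤ z.length := by
  have := h.length_add_one
  have := List.length_pos_of_ne_nil h.ne_nil.1
  have := List.length_pos_of_ne_nil h.ne_nil.2
  lia

theorem fst_mem_and_snd_mem (h : IsStaircase x y z) {t : X × Y} (ht : t ∈ z) :
    t.1 ∈ x ∧ t.2 ∈ y := by
  induction h <;> grind

theorem nodup (h : IsStaircase x y z) (hx : x.Nodup) (hy : y.Nodup) : z.Nodup := by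
  induction h with
  | singleton => exact List.nodup_singleton _
  | cons_left a h ih =>
    rw [List.nodup_cons] at hx ⊢
    exact ⟨fun hmem => hx.1 (h.fst_mem_and_snd_mem hmem).1, ih hx.2 hy⟩
  | cons_right b h ih =>
    rw [List.nodup_cons] at hy ⊢
    exact ⟨fun hmem => hy.1 (h.fst_mem_and_snd_mem hmem).2, ih hx hy.2⟩

theorem isChain {adjX : X → X → Prop} {adjY : Y → Y → Prop} (h : IsStaircase x y z)
    (hx : x.IsChain adjX) (hy : y.IsChain adjY) : z.IsChain (prodAdj adjX adjY) := by
  induction h with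
  | singleton => exact List.isChain_singleton _
  | @cons_left a x b y z h ih =>
    obtain ⟨a', x, rfl⟩ := List.exists_cons_of_ne_nil h.ne_nil.1
    rw [List.isChain_cons_cons] at hx
    refine List.isChain_cons.2 ⟨?_, ih hx.2 hy⟩
    rw [h.head?_eq]
    rintro _ ⟨⟩
    exact Or.inr ⟨hx.1, rfl⟩
  | @cons_right b a x y z h ih =>
    obtain ⟨b', y, rfl⟩ := List.exists_cons_of_ne_nil h.ne_nil.2
    rw [List.isChain_cons_cons] at hy
    refine List.isChain_cons.2 ⟨?_, ih hx hy.2⟩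
    rw [h.head?_eq]
    rintro _ ⟨⟩
    exact Or.inl ⟨rfl, hy.1⟩

end IsStaircase

theorem cross_mem_supported_isStaircase {X Y : Type*} (x : List X) (y : List Y) :
    cross x y ∈ supported ℤ ℤ {z | IsStaircase x y z} := by
  match x, y with
  | [], y => simp
  | x, [] => simp
  | a :: x, b :: y =>
    by_cases h : x = [] ∧ y = []
    · obtain ⟨rfl, rfl⟩ := h
      rw [cross_singleton_left a (by simp)]
      exact single_mem_supported ℤ _ (.singleton a b)
    · rw [cross_cons_cons a b (not_and_or.1 h)]
      exact Submodule.add_mem _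
        (prepend_mem_supported (fun _ => .cons_left a)
          (cross_mem_supported_isStaircase x (b :: y)))
        (Submodule.smul_mem _ _ <| prepend_mem_supported (fun _ => .cons_right b)
          (cross_mem_supported_isStaircase (a :: x) y))
termination_by x.length + y.length

section Leibniz

variable {X Y : Type*}

theorem crossLin_singleton_left (a : X) {w : List Y →₀ ℤ}
    (hw : w ∈ supported ℤ ℤ {y | y ≠ []}) :
    crossLin X Y (single [a] 1) w = mapDomain (List.map (a, ·)) w := by
  have h : supported ℤ ℤ {y : List Y | y ≠ []} ≤ LinearMap.eqLocus
      (crossLin X Y (single [a] 1)) (lmapDomain ℤ ℤ (List.map (a, ·))) :=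
    supported_le_iff_single_mem.2 fun y hy => by simp [cross_singleton_left a hy]
  exact h hw

theorem crossLin_singleton_right (b : Y) {w : List X →₀ ℤ}
    (hw : w ∈ supported ℤ ℤ {x | x ≠ []}) :
    crossLin X Y w (single [b] 1) = mapDomain (List.map (·, b)) w := by
  have h : supported ℤ ℤ {x : List X | x ≠ []} ≤ LinearMap.eqLocus
      ((crossLin X Y).flip (single [b] 1)) (lmapDomain ℤ ℤ (List.map (·, b))) :=
    supported_le_iff_single_mem.2 fun x hx => by simp [cross_singleton_right b hx]
  exact h hw

theorem augBdry_cross_singleton_left (a : X) {y : List Y} (hy : y.length ≠ 1) :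
    augBdry (X × Y) (cross [a] y) = crossLin X Y (single [a] 1) (augBdry Y (single y 1)) := by
  obtain rfl | hne := eq_or_ne y []
  · simp
  rw [cross_singleton_left a hne, augBdry_single_map,
    crossLin_singleton_left a (augBdry_single_mem_supported_ne_nil hy)]

theorem augBdry_cross_singleton_right (b : Y) {x : List X} (hx : x.length ≠ 1) :
    augBdry (X × Y) (cross x [b]) = crossLin X Y (augBdry X (single x 1)) (single [b] 1) := by
  obtain rfl | hne := eq_or_ne x []
  · simp
  rw [cross_singleton_right b hne, augBdry_single_map,
    crossLin_singleton_right b (augBdry_single_mem_supported_ne_nil hx)]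

-- The exponent `x.length + 1` has the parity of the degree `x.length - 1` of `x`.  For two
-- one-vertex paths the left side would be the empty path and the right side zero.
theorem augBdry_cross (x : List X) (y : List Y) (h : x.length ≠ 1 ∨ y.length ≠ 1) :
    augBdry (X × Y) (cross x y) =
      crossLin X Y (augBdry X (single x 1)) (single y 1) +
        (-1 : ℤ) ^ (x.length + 1) •
          crossLin X Y (single x 1) (augBdry Y (single y 1)) := by
  induction x, y using cross.induct with
  | case1 y => simp
  | case2 a x => simp
  | case3 a b y =>
    rw [augBdry_cross_singleton_left a (by simpa using h)]
    simp [augBdry_single_cons]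
  | case4 a a' x b =>
    rw [augBdry_cross_singleton_right b (by simp)]
    simp [augBdry_single_cons b]
  | case5 a a' x b b' y ih_left ih_right =>
    have face_left := crossLin_prepend_left a b (n := x.length) (y := b' :: y)
      (by simpa using augBdry_single_mem_supported (a' :: x)) (by simp)
    have face_right := crossLin_prepend_right a b (x := a' :: x) (by simp)
      (augBdry Y (single (b' :: y) 1))
    rw [cross_cons_cons a b (by simp), map_add, map_smul, augBdry_prepend, augBdry_prepend,
      ih_left (by simp), ih_right (by simp), augBdry_single_cons a, augBdry_single_cons b]
    simp only [map_sub, LinearMap.sub_apply, face_left, face_right, crossLin_single_single,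
      map_add, map_smul, List.length_cons, pow_succ]
    obtain sign | sign := neg_one_pow_eq_or ℤ x.length <;> rw [sign] <;> module

theorem bdry_cross (x : List X) (y : List Y) :
    bdry (X × Y) (cross x y) =
      crossLin X Y (bdry X (single x 1)) (single y 1) +
        (-1 : ℤ) ^ (x.length + 1) • crossLin X Y (single x 1) (bdry Y (single y 1)) := by
  by_cases h : x.length ≠ 1 ∨ y.length ≠ 1
  · have two_le : cross x y ∈ supported ℤ ℤ {z | 2 ≤ z.length} :=
      supported_mono (fun z hz => hz.two_le_length h) (cross_mem_supported_isStaircase x y)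
    rw [bdry_eq_augBdry two_le, crossLin_bdry_left, crossLin_bdry_right, augBdry_cross x y h]
  · push Not at h
    obtain ⟨⟨a, rfl⟩, ⟨b, rfl⟩⟩ := h.imp List.length_eq_one_iff.1 List.length_eq_one_iff.1
    simp [cross_singleton_left a, bdry_single]

theorem bdry_crossF {p : ℕ} {u : List X →₀ ℤ}
    (hu : u ∈ supported ℤ ℤ {x | x.length = p + 1}) (v : List Y →₀ ℤ) :
    bdry (X × Y) (crossF u v) =
      crossF (bdry X u) v + (-1 : ℤ) ^ p • crossF u (bdry Y v) := by
  simp only [crossF_eq_crossLin]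
  have h : supported ℤ ℤ {x : List X | x.length = p + 1} ≤ LinearMap.eqLocus
      ((crossLin X Y).compr₂ (bdry (X × Y)))
      (crossLin X Y ∘ₗ bdry X + (-1 : ℤ) ^ p • (crossLin X Y).compl₂ (bdry Y)) :=
    supported_le_iff_single_mem.2 fun x (hx : x.length = p + 1) => by
      rw [LinearMap.mem_eqLocus]
      ext1 y
      ext1
      simp [bdry_cross, hx, pow_succ]
  exact LinearMap.congr_fun (h hu) v

end Leibniz

section Omega

variable {V X Y : Type*} {adj : V → V → Prop} {adjX : X → X → Prop} {adjY : Y → Y → Prop}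
  {p q : ℕ} {u : List X →₀ ℤ} {v : List Y →₀ ℤ}

theorem isA_iff_mem_supported {n : ℕ} {w : List V →₀ ℤ} :
    IsA adj n w ↔
      w ∈ supported ℤ ℤ {l | l.length = n + 1 ∧ l.IsChain adj ∧ l.Nodup} :=
  Iff.rfl

theorem IsA.mem_supported_length {n : ℕ} {w : List V →₀ ℤ} (hw : IsA adj n w) :
    w ∈ supported ℤ ℤ {l | l.length = n + 1} :=
  fun l hl => (hw l hl).1

theorem isA_zero (n : ℕ) : IsA adj n 0 :=
  isA_iff_mem_supported.2 (zero_mem _)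

theorem IsA.add {n : ℕ} {w w' : List V →₀ ℤ} (hw : IsA adj n w) (hw' : IsA adj n w') :
    IsA adj n (w + w') :=
  isA_iff_mem_supported.2 (add_mem hw hw')

theorem IsA.smul {n : ℕ} {w : List V →₀ ℤ} (c : ℤ) (hw : IsA adj n w) : IsA adj n (c • w) :=
  isA_iff_mem_supported.2 (Submodule.smul_mem _ c hw)

theorem isA_cross {x : List X} {y : List Y}
    (hx : x.length = p + 1 ∧ x.IsChain adjX ∧ x.Nodup)
    (hy : y.length = q + 1 ∧ y.IsChain adjY ∧ y.Nodup) :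
    IsA (prodAdj adjX adjY) (p + q) (cross x y) := by
  refine supported_mono (fun z hz => ?_) (cross_mem_supported_isStaircase x y)
  have := hz.length_add_one
  exact ⟨by lia, hz.isChain hx.2.1 hy.2.1, hz.nodup hx.2.2 hy.2.2⟩

theorem IsA.crossF (hu : IsA adjX p u) (hv : IsA adjY q v) :
    IsA (prodAdj adjX adjY) (p + q) (crossF u v) :=
  isA_iff_mem_supported.2 <| Submodule.sum_mem _ fun x hx => Submodule.sum_mem _ fun y hy =>
    Submodule.smul_mem _ _ (isA_cross (hu x hx) (hv y hy))

theorem IsOmega.isA_crossF_bdry_left (hu : IsOmega adjX p u) (hv : IsA adjY q v) :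
    IsA (prodAdj adjX adjY) (p + q - 1) (crossF (bdry X u) v) := by
  cases p with
  | zero =>
    rw [bdry_eq_zero hu.1.mem_supported_length, crossF_eq_crossLin, map_zero]
    exact isA_zero _
  | succ p =>
    rw [show p + 1 + q - 1 = p + q by lia]
    exact IsA.crossF hu.2 hv

theorem IsOmega.isA_crossF_bdry_right (hu : IsA adjX p u) (hv : IsOmega adjY q v) :
    IsA (prodAdj adjX adjY) (p + q - 1) (crossF u (bdry Y v)) := by
  cases q with
  | zero =>
    rw [bdry_eq_zero hv.1.mem_supported_length, crossF_eq_crossLin, map_zero]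
    exact isA_zero _
  | succ q => exact hu.crossF hv.2

end Omega

/-- Leibniz rule for the cross product: for `u ∈ Ω_p(X;ℤ)` and `v ∈ Ω_q(Y;ℤ)`, the cross
product lies in `Ω_{p+q}(X ⊡ Y;ℤ)` and `∂(u × v) = (∂u) × v + (-1)^p u × (∂v)`. -/
theorem cross_mem_omega_and_leibniz {X Y : Type*} (adjX : X → X → Prop) (adjY : Y → Y → Prop)
    (p q : ℕ) (u : List X →₀ ℤ) (v : List Y →₀ ℤ)
    (hu : IsOmega adjX p u) (hv : IsOmega adjY q v) :
    IsOmega (prodAdj adjX adjY) (p + q) (crossF u v) ∧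
    bdry (X × Y) (crossF u v) =
      crossF (bdry X u) v + (-1 : ℤ) ^ p • crossF u (bdry Y v) := by
  have leibniz := bdry_crossF hu.1.mem_supported_length v
  refine ⟨⟨hu.1.crossF hv.1, ?_⟩, leibniz⟩
  rw [leibniz]
  exact (hu.isA_crossF_bdry_left hv.1).add ((hv.isA_crossF_bdry_right hu.1).smul _)
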